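/- Suppose that for every β > 0 an eigen-measure ν_β for (α,β) with exponent P(β) is given. If α > 1, then P(β)·e^{2β} → 1 as β → +∞; if α = 1, then P(β)·e^{2β} → (1+√5)/2 as β → +∞. -/

import Mathlib

/-!
Evaluating the eigen-measure identity on indicators of clopen sets computes the masses of the
rings `[aⁿ*ₐ]`, `a ∈ {0,1}`. With `A_α(y) = -κ d(y, a^∞)` on `[a]` (`κ = 1` for `a = 0`, `κ = 3`
for `a = 1`) and `γ = κβ`, one gets
`ν[aⁿ*ₐ] = ν[*ₐ] e^{-nP} e^{-γ(1-2⁻ⁿ)}` (`ring_mass`). Since `P > 0`, the point `a^∞` has no mass,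
so the ring masses sum to `1` (`hasSum_ring`) and, with `rₐ = ν{x₀ ≠ a}`,
`1/rₐ = 1 + Σ_{n≥1} e^{-nP} e^{-γ(1-2⁻ⁿ)}`. That series lies between `e^{-γ}/(e^P-1)` and
`e^{-γ}/(e^P-1) + γ e^{-γ/2}` (`sum_bounds`).

On the other hand `ν[2] = e^{-P-αβ}`, and adding up the three cylinders gives `r₀ + r₁ = 1 + ν[2]`.
With `u = e^{-2β}/(e^P-1)` and `θ = e^{-P}e^{-(α-1)β}` this becomes `u(u+θ) → 1`
(`algebra_bounds`). In particular `u` stays away from `0`, hence `P → 0`, so `θ` tends to `0` when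
`α > 1` and to `1` when `α = 1`. Solving the quadratic, `u` tends to `1`, respectively
`(√5-1)/2`, and `P e^{2β} ~ (e^P-1) e^{2β} = 1/u`.
-/

open MeasureTheory Filter Topology

noncomputable section

/-- The full shift space `Σ = {0,1,2}^ℕ`. -/
abbrev Sig : Type := ℕ → Fin 3

/-- The shift map `σ`. -/
def shift (x : Sig) : Sig := fun n => x (n + 1)

/-- The fixed point `0^∞`. -/
def zeroSeq : Sig := fun _ => 0

/-- The fixed point `1^∞`. -/
def oneSeq : Sig := fun _ => 1

/-- Prepending a symbol: `a·x = (a, x₀, x₁, …)`. -/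
def cons (a : Fin 3) (x : Sig) : Sig := fun n => Nat.casesOn n a x

open Classical in
/-- The metric `d(x,y) = (1/2)^(min{n : x n ≠ y n})`, with `d(x,x) = 0`. -/
def dist3 (x y : Sig) : ℝ :=
  if h : x ≠ y then (1 / 2 : ℝ) ^ Nat.find (Function.ne_iff.mp h) else 0

/-- The potential `A_α`. -/
def pot (α : ℝ) (x : Sig) : ℝ :=
  if x 0 = 0 then -dist3 x zeroSeq
  else if x 0 = 1 then -(3 * dist3 x oneSeq)
  else -α

/-- The transfer operator `L_β` (for parameter `α`). -/
def transfer (α β : ℝ) (f : Sig → ℝ) : Sig → ℝ :=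
  fun x => ∑ a : Fin 3, Real.exp (β * pot α (cons a x)) * f (cons a x)

/-- The ring `[a^n *_a] = {x : x_i = a for i < n, x_n ≠ a}`. -/
def ringSet (a : Fin 3) (n : ℕ) : Set Sig := {x | (∀ i < n, x i = a) ∧ x n ≠ a}

/-- The cylinder `[a] = {x : x₀ = a}`. -/
def cyl (a : Fin 3) : Set Sig := {x | x 0 = a}

/-- `H` is locally ring-constant: constant on `[2]` and on each ring `[0^m*₀]`, `[1^m*₁]`. -/
def LocallyRingConstant (H : Sig → ℝ) : Prop :=
  (∀ x ∈ cyl 2, ∀ y ∈ cyl 2, H x = H y) ∧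
  (∀ m : ℕ, 1 ≤ m → ∀ x ∈ ringSet 0 m, ∀ y ∈ ringSet 0 m, H x = H y) ∧
  (∀ m : ℕ, 1 ≤ m → ∀ x ∈ ringSet 1 m, ∀ y ∈ ringSet 1 m, H x = H y)

/-- An eigen-measure for `(α,β)` with exponent `P`:  a Borel probability measure `ν`
with `P > 0` and `∫ L_β f dν = e^P ∫ f dν` for every continuous `f`. -/
structure IsEigenMeasure (α β P : ℝ) (ν : Measure Sig) : Prop where
  P_pos : 0 < P
  prob : IsProbabilityMeasure ν
  eigenMeas : ∀ f : Sig → ℝ, Continuous f →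
    ∫ x, transfer α β f x ∂ν = Real.exp P * ∫ x, f x ∂ν

/-- Eigen-data `(P, H, ν)` for `(α,β)`. -/
structure IsEigenData (α β P : ℝ) (H : Sig → ℝ) (ν : Measure Sig) : Prop where
  P_pos : 0 < P
  H_cont : Continuous H
  H_pos : ∀ x, 0 < H x
  eigenFun : ∀ x, transfer α β H x = Real.exp P * H x
  prob : IsProbabilityMeasure ν
  eigenMeas : ∀ f : Sig → ℝ, Continuous f →
    ∫ x, transfer α β f x ∂ν = Real.exp P * ∫ x, f x ∂ν

/-- The Gibbs measure `μ(B) = (∫_B H dν)/(∫ H dν)`. -/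
def gibbs (H : Sig → ℝ) (ν : Measure Sig) : Measure Sig :=
  (ν.withDensity (fun x => ENNReal.ofReal (H x)) Set.univ)⁻¹ •
    ν.withDensity (fun x => ENNReal.ofReal (H x))

/-- Weak convergence (as `β → +∞`) of a family of measures to a measure `μ∞`:
convergence of integrals of every bounded continuous function. -/
def WeakLimit (μ : ℝ → Measure Sig) (μlim : Measure Sig) : Prop :=
  ∀ f : Sig → ℝ, Continuous f → (∃ C : ℝ, ∀ x, |f x| ≤ C) →
    Tendsto (fun β => ∫ x, f x ∂(μ β)) atTop (nhds (∫ x, f x ∂μlim))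

/-- `F(Z,β) = Σ_{k=0}^∞ e^{−kZ}·e^{β/2^{k+1}}`. -/
def Ffun (Z β : ℝ) : ℝ := ∑' k : ℕ, Real.exp (-(k : ℝ) * Z) * Real.exp (β / 2 ^ (k + 1))

/-- `Fpartial Z β m = F_{m-1}(Z,β) = Σ_{k=0}^{m-1} e^{−kZ}·e^{β/2^{k+1}}` (so `Fpartial Z β 0 = F_{-1} = 0`). -/
def Fpartial (Z β : ℝ) (m : ℕ) : ℝ :=
  ∑ k ∈ Finset.range m, Real.exp (-(k : ℝ) * Z) * Real.exp (β / 2 ^ (k + 1))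

/-! ### Ring masses of an eigen-measure -/

/-- The cylinder `[aⁿ]` of sequences starting with `n` symbols `a`. -/
def powCyl (a : Fin 3) (n : ℕ) : Set Sig := {x | ∀ i < n, x i = a}

lemma isClopen_coord (a : Fin 3) (n : ℕ) : IsClopen {x : Sig | x n = a} :=
  (isClopen_discrete ({a} : Set (Fin 3))).preimage (continuous_apply n)

lemma powCyl_succ (a : Fin 3) (n : ℕ) : powCyl a (n + 1) = powCyl a n ∩ {x | x n = a} := by
  ext x
  simp only [powCyl, Set.mem_ofPred_eq, Set.mem_inter_iff]
  constructor
  · intro h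
    exact ⟨fun i hi => h i (by omega), h n (by omega)⟩
  · rintro ⟨h, h'⟩ i hi
    rcases Nat.lt_succ_iff_lt_or_eq.mp hi with h1 | rfl
    · exact h i h1
    · exact h'

lemma ringSet_eq (a : Fin 3) (n : ℕ) : ringSet a n = powCyl a n \ {x | x n = a} := rfl

lemma isClopen_powCyl (a : Fin 3) (n : ℕ) : IsClopen (powCyl a n) := by
  induction n with
  | zero => simp [powCyl, isClopen_univ]
  | succ n ih => rw [powCyl_succ]; exact ih.inter (isClopen_coord a n)

lemma isClopen_ringSet (a : Fin 3) (n : ℕ) : IsClopen (ringSet a n) := by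
  rw [ringSet_eq]; exact (isClopen_powCyl a n).diff (isClopen_coord a n)

lemma cons_mem_powCyl (a : Fin 3) (n : ℕ) (x : Sig) :
    cons a x ∈ powCyl a (n + 1) ↔ x ∈ powCyl a n := by
  constructor
  · intro h i hi
    exact h (i + 1) (by omega)
  · intro h i hi
    cases i with
    | zero => rfl
    | succ i => exact h i (by omega)

lemma cons_mem_ringSet (a : Fin 3) (n : ℕ) (x : Sig) :
    cons a x ∈ ringSet a (n + 1) ↔ x ∈ ringSet a n :=
  and_congr (cons_mem_powCyl a n x) Iff.rfl

lemma dist3_nonneg (x y : Sig) : 0 ≤ dist3 x y := by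
  unfold dist3; split_ifs <;> positivity

lemma dist3_ring {a : Fin 3} {n : ℕ} {x : Sig} (hx : x ∈ ringSet a n) :
    dist3 x (fun _ => a) = (1 / 2) ^ n := by
  classical
  have hne : x ≠ fun _ => a := fun h => hx.2 (congrFun h n)
  unfold dist3
  rw [dif_pos hne]
  congr 1
  rw [Nat.find_eq_iff]
  exact ⟨hx.2, fun m hm => not_not.mpr (hx.1 m hm)⟩

/-- On the indicator of a subset of `[a]` only the branch `a` of the transfer operator survives. -/
lemma transfer_indicator (α β : ℝ) (a : Fin 3) (S : Set Sig) (hS : ∀ y ∈ S, y 0 = a) (x : Sig) :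
    transfer α β (S.indicator fun _ => 1) x =
      {x | cons a x ∈ S}.indicator (fun x => Real.exp (β * pot α (cons a x))) x := by
  unfold transfer
  rw [Finset.sum_eq_single a]
  · by_cases h : cons a x ∈ S
    · simp [Set.indicator, h]
    · simp [Set.indicator, h]
  · intro b _ hb
    have : cons b x ∉ S := fun h => hb (hS _ h)
    simp [Set.indicator, this]
  · simp

lemma eigen_set {α β P : ℝ} {ν : Measure Sig} (h : IsEigenMeasure α β P ν) (a : Fin 3)
    (S : Set Sig) (hS : ∀ y ∈ S, y 0 = a) (hc : IsClopen S) :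
    Real.exp P * ν.real S =
      ∫ x, {x | cons a x ∈ S}.indicator (fun x => Real.exp (β * pot α (cons a x))) x ∂ν := by
  have := h.eigenMeas (S.indicator fun _ => 1) (hc.continuous_indicator continuous_const)
  simp_rw [transfer_indicator α β a S hS] at this
  rw [this, integral_indicator hc.isOpen.measurableSet]
  simp

lemma eigen_set_const {α β P : ℝ} {ν : Measure Sig} (h : IsEigenMeasure α β P ν) (a : Fin 3)
    (S T : Set Sig) (hS : ∀ y ∈ S, y 0 = a) (hc : IsClopen S) (hT : IsClopen T)
    (hST : ∀ x, cons a x ∈ S ↔ x ∈ T) (c : ℝ)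
    (hcst : ∀ x ∈ T, Real.exp (β * pot α (cons a x)) = c) :
    Real.exp P * ν.real S = c * ν.real T := by
  rw [eigen_set h a S hS hc]
  have h1 : {x | cons a x ∈ S} = T := Set.ext hST
  rw [h1, Set.indicator_congr hcst, integral_indicator hT.isOpen.measurableSet]
  simp [mul_comm]

section ring

variable {α β P κ : ℝ} {ν : Measure Sig} {a : Fin 3}

lemma powCyl_mass_succ_le (h : IsEigenMeasure α β P ν) (hβ : 0 < β) (hκ : 0 ≤ κ)
    (hA : ∀ y : Sig, y 0 = a → pot α y = -(κ * dist3 y (fun _ => a))) (n : ℕ) :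
    Real.exp P * ν.real (powCyl a (n + 1)) ≤ ν.real (powCyl a n) := by
  have := h.prob
  rw [eigen_set h a (powCyl a (n + 1)) (fun y hy => hy 0 (by omega)) (isClopen_powCyl a (n + 1))]
  have h2 : ∫ x, (powCyl a n).indicator (fun _ => (1 : ℝ)) x ∂ν = ν.real (powCyl a n) := by
    rw [integral_indicator (isClopen_powCyl a n).isOpen.measurableSet]; simp
  have h1 : {x | cons a x ∈ powCyl a (n + 1)} = powCyl a n := Set.ext (cons_mem_powCyl a n)
  rw [← h2, h1]
  refine integral_mono_of_nonneg ?_ ?_ ?_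
  · exact Eventually.of_forall fun x => Set.indicator_nonneg (fun _ _ => (Real.exp_pos _).le) x
  · exact (integrable_const 1).indicator (isClopen_powCyl a n).isOpen.measurableSet
  · refine Eventually.of_forall fun x => Set.indicator_le_indicator ?_
    rw [Real.exp_le_one_iff, hA _ rfl]
    have := mul_nonneg hβ.le (mul_nonneg hκ (dist3_nonneg (cons a x) fun _ => a))
    linarith

lemma powCyl_mass_le (h : IsEigenMeasure α β P ν) (hβ : 0 < β) (hκ : 0 ≤ κ)
    (hA : ∀ y : Sig, y 0 = a → pot α y = -(κ * dist3 y (fun _ => a))) (n : ℕ) :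
    ν.real (powCyl a n) ≤ Real.exp (-P) ^ n := by
  have := h.prob
  induction n with
  | zero => simp
  | succ n ih =>
    have h1 := (powCyl_mass_succ_le h hβ hκ hA n).trans ih
    calc ν.real (powCyl a (n + 1))
        = Real.exp (-P) * (Real.exp P * ν.real (powCyl a (n + 1))) := by
          rw [← mul_assoc, ← Real.exp_add]; simp
      _ ≤ Real.exp (-P) * Real.exp (-P) ^ n := by gcongr
      _ = _ := by ring

lemma sum_ring (h : IsEigenMeasure α β P ν) (n : ℕ) :
    ∑ k ∈ Finset.range n, ν.real (ringSet a k) = 1 - ν.real (powCyl a n) := by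
  have := h.prob
  induction n with
  | zero => simp [powCyl]
  | succ n ih =>
    rw [Finset.sum_range_succ, ih, ringSet_eq, powCyl_succ]
    have := measureReal_sdiff_add_inter (μ := ν) (s := powCyl a n)
      (isClopen_coord a n).isOpen.measurableSet
    linarith

/-- The rings exhaust the mass, as `a^∞` carries none. -/
lemma hasSum_ring (h : IsEigenMeasure α β P ν) (hβ : 0 < β) (hκ : 0 ≤ κ)
    (hA : ∀ y : Sig, y 0 = a → pot α y = -(κ * dist3 y (fun _ => a))) :
    HasSum (fun k => ν.real (ringSet a k)) 1 := by
  rw [hasSum_iff_tendsto_nat_of_nonneg (fun _ => measureReal_nonneg)]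
  simp_rw [sum_ring h]
  have h0 : Tendsto (fun n => ν.real (powCyl a n)) atTop (𝓝 0) :=
    squeeze_zero (fun _ => measureReal_nonneg) (powCyl_mass_le h hβ hκ hA)
      (tendsto_pow_atTop_nhds_zero_of_lt_one (Real.exp_pos _).le
        (Real.exp_lt_one_iff.mpr (by linarith [h.P_pos])))
  simpa using h0.const_sub 1

lemma ring_mass (h : IsEigenMeasure α β P ν)
    (hA : ∀ y : Sig, y 0 = a → pot α y = -(κ * dist3 y (fun _ => a))) (n : ℕ) :
    ν.real (ringSet a n) = ν.real (ringSet a 0) *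
      (Real.exp (-P) ^ n * Real.exp (-(κ * β) * (1 - (1 / 2) ^ n))) := by
  induction n with
  | zero => simp
  | succ n ih =>
    have h1 := eigen_set_const h a (ringSet a (n + 1)) (ringSet a n)
      (fun y hy => hy.1 0 (by omega)) (isClopen_ringSet _ _) (isClopen_ringSet _ _)
      (cons_mem_ringSet a n) (Real.exp (-(κ * β) * (1 / 2) ^ (n + 1))) (by
        intro x hx
        rw [hA _ rfl, dist3_ring ((cons_mem_ringSet a n x).mpr hx)]
        ring_nf)
    have h2 : ν.real (ringSet a (n + 1)) = Real.exp (-P) *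
        (Real.exp (-(κ * β) * (1 / 2) ^ (n + 1)) * ν.real (ringSet a n)) := by
      rw [← h1, ← mul_assoc, ← Real.exp_add]; simp
    rw [h2, ih]
    have h3 : Real.exp (-(κ * β) * (1 - (1 / 2) ^ (n + 1))) =
        Real.exp (-(κ * β) * (1 / 2) ^ (n + 1)) * Real.exp (-(κ * β) * (1 - (1 / 2) ^ n)) := by
      rw [← Real.exp_add]; ring_nf
    rw [h3]; ring

end ring

/-! ### Bounds on the ring series -/

/-- Two-sided estimate for the series determined by the ring masses. The upper bound rests on
`e^t ≤ 1 + t e^t` with `t = γ/2^{k+1} ≤ γ/2`. -/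
lemma sum_bounds {P γ : ℝ} (hP : 0 < P) (hγ : 0 ≤ γ) {r : ℕ → ℝ} (hr : ∀ n, 0 ≤ r n)
    (hs : HasSum r 1)
    (hf : ∀ n, r n = r 0 * (Real.exp (-P) ^ n * Real.exp (-γ * (1 - (1 / 2) ^ n)))) :
    0 < r 0 ∧ 1 + Real.exp (-γ) / (Real.exp P - 1) ≤ 1 / r 0 ∧
      1 / r 0 ≤ 1 + Real.exp (-γ) / (Real.exp P - 1) + γ * Real.exp (-γ / 2) := by
  have h0 : 0 < r 0 := by
    refine lt_of_le_of_ne (hr 0) fun h => ?_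
    have : r = fun _ => 0 := by funext n; rw [hf n, ← h, zero_mul]
    rw [this] at hs
    exact one_ne_zero (hs.unique hasSum_zero)
  have hQ : 0 < Real.exp P - 1 := by linarith [Real.add_one_le_exp P]
  set s : ℕ → ℝ := fun n => Real.exp (-P) ^ n * Real.exp (-γ * (1 - (1 / 2) ^ n)) with hsdef
  have hs1 : HasSum s (1 / r 0) := by
    have := hs.mul_left (1 / r 0)
    rw [mul_one] at this
    refine this.congr_fun fun n => ?_
    rw [hf n, one_div, inv_mul_cancel_left₀ h0.ne']
  have hs2 : HasSum (fun n => s (n + 1)) (1 / r 0 - 1) := by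
    have := (hasSum_nat_add_iff' (f := s) 1).mpr hs1
    simpa [hsdef] using this
  have hq : Real.exp (-P) < 1 := Real.exp_lt_one_iff.mpr (by linarith)
  have hgeo : HasSum (fun n => Real.exp (-P) ^ (n + 1) * Real.exp (-γ))
      (Real.exp (-γ) / (Real.exp P - 1)) := by
    have := (hasSum_geometric_of_lt_one (Real.exp_pos (-P)).le hq).mul_left
      (Real.exp (-P) * Real.exp (-γ))
    have e : Real.exp (-P) * Real.exp (-γ) * (1 - Real.exp (-P))⁻¹ =
        Real.exp (-γ) / (Real.exp P - 1) := by
      have : 1 - Real.exp (-P) ≠ 0 := by linarith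
      have hm : Real.exp (-P) * Real.exp P = 1 := by rw [← Real.exp_add]; simp
      field_simp
      linear_combination hm
    rw [e] at this
    refine this.congr_fun fun n => ?_
    ring
  have hhalf : HasSum (fun n : ℕ => γ * Real.exp (-γ / 2) * (1 / 2 : ℝ) ^ (n + 1))
      (γ * Real.exp (-γ / 2)) := by
    have := (hasSum_geometric_two).mul_left (γ * Real.exp (-γ / 2) * (1 / 2))
    rw [show γ * Real.exp (-γ / 2) * (1 / 2) * 2 = γ * Real.exp (-γ / 2) by ring] at this
    refine this.congr_fun fun n => ?_
    ring
  refine ⟨h0, ?_, ?_⟩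
  · have := hasSum_le (fun n => ?_) hgeo hs2
    · linarith
    · simp only [hsdef]
      gcongr
      have : (0 : ℝ) ≤ (1 / 2) ^ (n + 1) := by positivity
      nlinarith
  · have := hasSum_le (fun n => ?_) hs2 (hgeo.add hhalf)
    · linarith
    · simp only [hsdef]
      set y : ℝ := (1 / 2) ^ (n + 1) with hy
      have hy0 : 0 ≤ y := by positivity
      have hy1 : y ≤ 1 / 2 := by
        rw [hy, pow_succ]
        have : (1 / 2 : ℝ) ^ n ≤ 1 := pow_le_one₀ (by norm_num) (by norm_num)
        linarith
      have e1 : Real.exp (-γ * (1 - y)) ≤ Real.exp (-γ) + γ * Real.exp (-γ / 2) * y := by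
        have a1 : Real.exp (γ * y) ≤ 1 + γ * y * Real.exp (γ * y) := by
          have := Real.add_one_le_exp (-(γ * y))
          have hm : Real.exp (-(γ * y)) * Real.exp (γ * y) = 1 := by
            rw [← Real.exp_add]; simp
          nlinarith [Real.exp_pos (γ * y)]
        have a2 : Real.exp (γ * y) ≤ Real.exp (γ / 2) := by
          gcongr; nlinarith
        have a3 : Real.exp (γ * y) ≤ 1 + γ * y * Real.exp (γ / 2) :=
          a1.trans (by gcongr)
        calc Real.exp (-γ * (1 - y)) = Real.exp (-γ) * Real.exp (γ * y) := by
              rw [← Real.exp_add]; ring_nf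
          _ ≤ Real.exp (-γ) * (1 + γ * y * Real.exp (γ / 2)) := by gcongr
          _ = Real.exp (-γ) + γ * (Real.exp (-γ) * Real.exp (γ / 2)) * y := by ring
          _ = _ := by rw [← Real.exp_add]; ring_nf
      have hp1 : Real.exp (-P) ^ (n + 1) ≤ 1 := pow_le_one₀ (Real.exp_pos _).le hq.le
      calc Real.exp (-P) ^ (n + 1) * Real.exp (-γ * (1 - y))
          ≤ Real.exp (-P) ^ (n + 1) * (Real.exp (-γ) + γ * Real.exp (-γ / 2) * y) := by gcongr
        _ = Real.exp (-P) ^ (n + 1) * Real.exp (-γ)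
            + Real.exp (-P) ^ (n + 1) * (γ * Real.exp (-γ / 2) * y) := by ring
        _ ≤ _ := by
          refine add_le_add le_rfl ?_
          exact mul_le_of_le_one_left (by positivity) hp1

/-- The three cylinders carry total mass `1`, and `ν[2] = e^{-P-αβ}`. -/
lemma cylinder_balance {α β P : ℝ} {ν : Measure Sig} (h : IsEigenMeasure α β P ν) :
    ν.real (ringSet 0 0) + ν.real (ringSet 1 0) = 1 + Real.exp (-P) * Real.exp (-(α * β)) := by
  have := h.prob
  have hm : ∀ a : Fin 3, MeasurableSet {x : Sig | x 0 = a} := fun a =>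
    (isClopen_coord a 0).isOpen.measurableSet
  have hc : ∀ a : Fin 3, ν.real (ringSet a 0) = 1 - ν.real {x : Sig | x 0 = a} := by
    intro a
    have : ringSet a 0 = {x : Sig | x 0 = a}ᶜ := by ext; simp [ringSet]
    rw [this, probReal_compl_eq_one_sub (hm a)]
  have h2 : Real.exp P * ν.real {x : Sig | x 0 = 2} = Real.exp (-(α * β)) * ν.real Set.univ :=
    eigen_set_const h 2 _ _ (fun y hy => hy) (isClopen_coord 2 0) isClopen_univ
      (fun x => ⟨fun _ => trivial, fun _ => rfl⟩) _ (by
        intro x _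
        have : pot α (cons 2 x) = -α := by simp [pot, cons]
        rw [this]; ring_nf)
  have h2' : ν.real {x : Sig | x 0 = 2} = Real.exp (-P) * Real.exp (-(α * β)) := by
    rw [probReal_univ, mul_one] at h2
    rw [← h2, ← mul_assoc, ← Real.exp_add]; simp
  have hsum : ν.real {x : Sig | x 0 = 0} + ν.real {x : Sig | x 0 = 1}
      + ν.real {x : Sig | x 0 = 2} = 1 := by
    have d1 : Disjoint {x : Sig | x 0 = 0} {x : Sig | x 0 = 1} := by
      rw [Set.disjoint_left]; intro x hx hy
      simp only [Set.mem_ofPred_eq] at hx hy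
      rw [hx] at hy; exact absurd hy (by decide)
    have d2 : Disjoint ({x : Sig | x 0 = 0} ∪ {x : Sig | x 0 = 1}) {x : Sig | x 0 = 2} := by
      rw [Set.disjoint_left]; intro x hx hy
      simp only [Set.mem_ofPred_eq, Set.mem_union] at hx hy
      rw [hy] at hx; exact absurd hx (by decide)
    rw [← measureReal_union d1 (hm 1), ← measureReal_union d2 (hm 2)]
    have : ({x : Sig | x 0 = 0} ∪ {x : Sig | x 0 = 1}) ∪ {x : Sig | x 0 = 2} = Set.univ := by
      ext x
      simp only [Set.mem_union, Set.mem_ofPred_eq, Set.mem_univ, iff_true]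
      generalize x 0 = b
      revert b; decide
    rw [this, probReal_univ]
  rw [hc, hc, ← h2']
  linarith

/-! ### The limiting quadratic equation -/

/-- Here `x = e^{-β}`, `u = x²/(e^P-1)`, `θ x = ν[2]`, and `e0`, `e1` are the rescaled error terms
of the two ring series. -/
lemma algebra_bounds {x u θ r0 r1 e0 e1 : ℝ} (hx : 0 < x) (hx1 : x ≤ 1) (hu : 0 < u)
    (hθ : 0 ≤ θ) (hθ1 : θ ≤ 1) (he0 : 0 ≤ e0) (he1 : 0 ≤ e1) (h0 : 0 < r0) (h1 : 0 < r1)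
    (hsum : r0 + r1 = 1 + θ * x)
    (l0 : 1 + u / x ≤ 1 / r0) (u0 : 1 / r0 ≤ 1 + u / x + e0 / x)
    (l1 : 1 + u * x ≤ 1 / r1) (u1 : 1 / r1 ≤ 1 + u * x + e1 * x) :
    u * (u + θ) ≤ 1 + 2 * x ∧ 1 - ((x + e0) * (3 + e1) + 2 * e1) ≤ u * (u + θ) := by
  have a0 : r0 * (x + u) ≤ x := by
    rw [le_div_iff₀ h0] at l0
    have : r0 * (x + u) = ((1 + u / x) * r0) * x := by field_simp
    rw [this]; nlinarith
  have b0 : x ≤ r0 * (x + u + e0) := by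
    rw [div_le_iff₀ h0] at u0
    have : r0 * (x + u + e0) = ((1 + u / x + e0 / x) * r0) * x := by field_simp
    rw [this]; nlinarith
  have a1 : r1 * (1 + u * x) ≤ 1 := by
    rw [le_div_iff₀ h1] at l1; linarith
  have b1 : 1 - r1 ≤ (u + e1) * x := by
    have : 2 - r1 ≤ 1 / r1 := by
      rw [le_div_iff₀ h1]; nlinarith [sq_nonneg (r1 - 1)]
    linarith
  have hr0 : r0 = (1 - r1) + θ * x := by linarith
  have hux : 0 < u * x := by positivity
  have c1 : u * x ≤ (1 - r1) * (1 + u * x) := by linarith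
  -- multiply `r0 * u ≤ x` by `1 + u x` and cancel `x`
  have c2 : u * (u + θ * (1 + u * x)) ≤ 1 + u * x := by
    have d1 : r0 * u ≤ x := by nlinarith
    have d2 : (r0 * u) * (1 + u * x) ≤ x * (1 + u * x) := by gcongr
    have d3 : u * (u * x) ≤ u * ((1 - r1) * (1 + u * x)) := by gcongr
    have d4 : x * (u * (u + θ * (1 + u * x))) ≤ x * (1 + u * x) := by
      rw [hr0] at d2; nlinarith
    exact le_of_mul_le_mul_left d4 hx
  have c3 : u * (u + θ) ≤ 1 + u * x := by
    refine le_trans ?_ c2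
    have : 0 ≤ θ * (u * x) := by positivity
    gcongr
    nlinarith
  have hu2 : u ≤ 2 := by
    by_contra hcon
    push Not at hcon
    have : 0 ≤ u * θ := by positivity
    nlinarith
  refine ⟨c3.trans (by gcongr), ?_⟩
  have c4 : 1 ≤ (u + e1 + θ) * (x + u + e0) := by
    have d1 : r0 ≤ (u + e1 + θ) * x := by linarith
    have d2 : x * 1 ≤ x * ((u + e1 + θ) * (x + u + e0)) := by
      have : r0 * (x + u + e0) ≤ ((u + e1 + θ) * x) * (x + u + e0) := by gcongr
      nlinarith
    exact le_of_mul_le_mul_left d2 hx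
  have c5 : (x + e0) * (u + e1 + θ) ≤ (x + e0) * (3 + e1) :=
    mul_le_mul_of_nonneg_left (by linarith) (by positivity)
  have c6 : u * e1 ≤ 2 * e1 := by gcongr
  nlinarith

/-- The estimates of `algebra_bounds` for an eigen-measure, with all quantities explicit. -/
lemma eigen_bounds {α β P : ℝ} {ν : Measure Sig} (h : IsEigenMeasure α β P ν) (hβ : 0 < β)
    (hα : 1 ≤ α) :
    let x := Real.exp (-β)
    let u := Real.exp (-β) ^ 2 / (Real.exp P - 1)
    let θ := Real.exp (-P) * Real.exp (-((α - 1) * β))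
    let w := β * Real.exp (-β / 2)
    u * (u + θ) ≤ 1 + 2 * x ∧ 1 - ((x + w * x) * (3 + 3 * w) + 2 * (3 * w)) ≤ u * (u + θ) := by
  intro x u θ w
  have hx : 0 < x := Real.exp_pos _
  have hQ : 0 < Real.exp P - 1 := by linarith [Real.add_one_le_exp P, h.P_pos]
  have hA0 : ∀ y : Sig, y 0 = 0 → pot α y = -(1 * dist3 y (fun _ => 0)) := by
    intro y hy; simp [pot, hy]; rfl
  have hA1 : ∀ y : Sig, y 0 = 1 → pot α y = -(3 * dist3 y (fun _ => 1)) := by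
    intro y hy; simp [pot, hy]; rfl
  obtain ⟨p0, l0, u0⟩ := sum_bounds h.P_pos (γ := 1 * β) (by positivity)
    (fun _ => measureReal_nonneg) (hasSum_ring h hβ (by norm_num) hA0) (ring_mass h hA0)
  obtain ⟨p1, l1, u1⟩ := sum_bounds h.P_pos (γ := 3 * β) (by positivity)
    (fun _ => measureReal_nonneg) (hasSum_ring h hβ (by norm_num) hA1) (ring_mass h hA1)
  have hx3 : Real.exp (-(3 * β)) = x ^ 3 := by
    simp only [x]; rw [← Real.exp_nat_mul]; congr 1; push_cast; ring
  have hw3 : Real.exp (-(3 * β) / 2) = Real.exp (-β / 2) * x := by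
    simp only [x]; rw [← Real.exp_add]; congr 1; ring
  have E0 : Real.exp (-(1 * β)) / (Real.exp P - 1) = u / x := by
    rw [one_mul]; simp only [u]; change x / _ = x ^ 2 / _ / x; field_simp
  have E1 : Real.exp (-(3 * β)) / (Real.exp P - 1) = u * x := by
    rw [hx3]; simp only [u]; change _ = x ^ 2 / _ * x; ring
  have F0 : 1 * β * Real.exp (-(1 * β) / 2) = w * x / x := by
    rw [one_mul, mul_div_cancel_right₀ _ hx.ne']
  have F1 : 3 * β * Real.exp (-(3 * β) / 2) = 3 * w * x := by
    rw [hw3]; simp only [w]; ring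
  rw [E0] at l0 u0
  rw [F0] at u0
  rw [E1] at l1 u1
  rw [F1] at u1
  have hw : 0 ≤ w := by simp only [w]; positivity
  refine algebra_bounds hx (Real.exp_le_one_iff.mpr (by linarith)) (by simp only [u]; positivity)
    (by simp only [θ]; positivity) ?_ (by positivity) (by positivity) p0 p1 ?_ l0 u0 l1 u1
  · simp only [θ]
    rw [← Real.exp_add, Real.exp_le_one_iff]
    have : 0 ≤ (α - 1) * β := mul_nonneg (by linarith) hβ.le
    linarith [h.P_pos]
  · rw [cylinder_balance h]
    simp only [θ, x]
    rw [mul_assoc, ← Real.exp_add (-((α - 1) * β))]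
    ring_nf

/-- The asymptotics in terms of the limit `t` of `e^{-(α-1)β}`: the limit is the
reciprocal of the positive root of `u² + t u = 1`. -/
lemma pressure_limit {α t : ℝ} (hα : 1 ≤ α) {P : ℝ → ℝ} {ν : ℝ → Measure Sig}
    (hE : ∀ β > (0 : ℝ), IsEigenMeasure α β (P β) (ν β))
    (ht : Tendsto (fun β : ℝ => Real.exp (-((α - 1) * β))) atTop (𝓝 t)) :
    Tendsto (fun β => P β * Real.exp (2 * β)) atTop
      (𝓝 ((-t + Real.sqrt (t ^ 2 + 4)) / 2)⁻¹) := by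
  set u : ℝ → ℝ := fun β => Real.exp (-β) ^ 2 / (Real.exp (P β) - 1) with hu
  set θ : ℝ → ℝ := fun β => Real.exp (-P β) * Real.exp (-((α - 1) * β)) with hθ
  have hx : Tendsto (fun β : ℝ => Real.exp (-β)) atTop (𝓝 0) :=
    Real.tendsto_exp_neg_atTop_nhds_zero
  have hw : Tendsto (fun β : ℝ => β * Real.exp (-β / 2)) atTop (𝓝 0) := by
    have h1 := (Real.tendsto_pow_mul_exp_neg_atTop_nhds_zero 1).comp
      (tendsto_id.atTop_div_const (show (0 : ℝ) < 2 by norm_num))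
    have h2 := h1.const_mul 2
    rw [mul_zero] at h2
    refine h2.congr fun β => ?_
    simp only [Function.comp, id, pow_one]
    rw [show -(β / 2) = -β / 2 by ring]; ring
  have hQ : ∀ β > 0, 0 < Real.exp (P β) - 1 := fun β hβ => by
    linarith [Real.add_one_le_exp (P β), (hE β hβ).P_pos]
  have hupos : ∀ β > 0, 0 < u β := fun β hβ => by
    have := hQ β hβ
    simp only [hu]; positivity
  have hlim : Tendsto (fun β => u β * (u β + θ β)) atTop (𝓝 1) := by
    refine tendsto_of_tendsto_of_tendsto_of_le_of_le'
      (g := fun β => 1 - ((Real.exp (-β) + β * Real.exp (-β / 2) * Real.exp (-β)) *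
        (3 + 3 * (β * Real.exp (-β / 2))) + 2 * (3 * (β * Real.exp (-β / 2)))))
      (h := fun β => 1 + 2 * Real.exp (-β)) ?_ ?_ ?_ ?_
    · have := ((((hx.add (hw.mul hx)).mul ((hw.const_mul 3).const_add 3)).add
        ((hw.const_mul 3).const_mul 2))).const_sub 1
      simpa using this
    · simpa using (hx.const_mul 2).const_add 1
    · filter_upwards [eventually_gt_atTop 0] with β hβ
      exact (eigen_bounds (hE β hβ) hβ hα).2
    · filter_upwards [eventually_gt_atTop 0] with β hβ
      exact (eigen_bounds (hE β hβ) hβ hα).1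
  have hθ1 : ∀ β > 0, 0 ≤ θ β ∧ θ β ≤ 1 := fun β hβ => by
    refine ⟨by simp only [hθ]; positivity, ?_⟩
    simp only [hθ]
    rw [← Real.exp_add, Real.exp_le_one_iff]
    have : 0 ≤ (α - 1) * β := mul_nonneg (by linarith) hβ.le
    linarith [(hE β hβ).P_pos]
  -- `u (u + 1) ≥ u (u + θ) > 1/2` keeps `u` above `1/3`, whence `P ≤ e^P - 1 ≤ 3 e^{-2β}`
  have hP0 : Tendsto P atTop (𝓝 0) := by
    have hub : Tendsto (fun β : ℝ => 3 * Real.exp (-β) ^ 2) atTop (𝓝 0) := by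
      simpa using (hx.pow 2).const_mul 3
    refine tendsto_of_tendsto_of_tendsto_of_le_of_le' tendsto_const_nhds hub ?_ ?_
    · filter_upwards [eventually_gt_atTop 0] with β hβ
      exact (hE β hβ).P_pos.le
    · filter_upwards [eventually_gt_atTop 0,
        hlim.eventually (lt_mem_nhds (show (1 / 2 : ℝ) < 1 by norm_num))] with β hβ h1
      have hp := hupos β hβ
      have hq := hQ β hβ
      have h3 : 1 / 3 ≤ u β := by
        by_contra hcon
        push Not at hcon
        nlinarith [(hθ1 β hβ).2, (hθ1 β hβ).1]
      have h4 : u β * (Real.exp (P β) - 1) = Real.exp (-β) ^ 2 := by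
        simp only [hu]; field_simp
      nlinarith [Real.add_one_le_exp (P β)]
  have hθt : Tendsto θ atTop (𝓝 t) := by
    have h1 : Tendsto (fun β => Real.exp (-P β)) atTop (𝓝 1) := by
      simpa using hP0.neg.rexp
    simpa using h1.mul ht
  have hut : Tendsto u atTop (𝓝 ((-t + Real.sqrt (t ^ 2 + 4)) / 2)) := by
    have h1 : Tendsto (fun β => (-θ β + Real.sqrt (θ β ^ 2 + 4 * (u β * (u β + θ β)))) / 2) atTop
        (𝓝 ((-t + Real.sqrt (t ^ 2 + 4 * 1)) / 2)) :=
      (hθt.neg.add ((hθt.pow 2).add (hlim.const_mul 4)).sqrt).div_const 2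
    rw [mul_one] at h1
    refine h1.congr' ?_
    filter_upwards [eventually_gt_atTop 0] with β hβ
    have h2 : θ β ^ 2 + 4 * (u β * (u β + θ β)) = (θ β + 2 * u β) ^ 2 := by ring
    rw [h2, Real.sqrt_sq (by linarith [(hθ1 β hβ).1, hupos β hβ])]
    ring
  have hpos : 0 < (-t + Real.sqrt (t ^ 2 + 4)) / 2 := by
    have : t < Real.sqrt (t ^ 2 + 4) := Real.lt_sqrt_of_sq_lt (by linarith)
    linarith
  have hC := hut.inv₀ hpos.ne'
  have heP : Tendsto (fun β => Real.exp (-P β)) atTop (𝓝 1) := by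
    simpa using hP0.neg.rexp
  have hCl : Tendsto (fun β => Real.exp (-P β) * (u β)⁻¹) atTop
      (𝓝 ((-t + Real.sqrt (t ^ 2 + 4)) / 2)⁻¹) := by
    simpa using heP.mul hC
  have hinv : ∀ β, (u β)⁻¹ = (Real.exp (P β) - 1) * Real.exp (2 * β) := fun β => by
    simp only [hu]
    rw [inv_div, div_eq_mul_inv, ← Real.exp_nat_mul, ← Real.exp_neg]
    congr 2; push_cast; ring
  -- `1 - e^{-P} ≤ P ≤ e^P - 1`
  refine tendsto_of_tendsto_of_tendsto_of_le_of_le hCl hC (fun β => ?_) (fun β => ?_)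
  · simp only [hinv]
    rw [← mul_assoc]
    gcongr
    have h1 : Real.exp (-P β) * Real.exp (P β) = 1 := by rw [← Real.exp_add]; simp
    nlinarith [Real.add_one_le_exp (-P β)]
  · simp only [hinv]
    gcongr
    linarith [Real.add_one_le_exp (P β)]

/-- Fine asymptotics of the pressure: if `α > 1` then `P(β)e^{2β} → 1`; if `α = 1` then
`P(β)e^{2β} → (1+√5)/2`. -/
theorem pressure_fine_asymptotics (α : ℝ)
    (P : ℝ → ℝ) (ν : ℝ → Measure Sig)
    (hE : ∀ β > (0 : ℝ), IsEigenMeasure α β (P β) (ν β)) :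
    (1 < α → Tendsto (fun β => P β * Real.exp (2 * β)) atTop (nhds 1)) ∧
    (α = 1 → Tendsto (fun β => P β * Real.exp (2 * β)) atTop
      (nhds ((1 + Real.sqrt 5) / 2))) := by
  constructor
  · intro hα
    have ht : Tendsto (fun β : ℝ => Real.exp (-((α - 1) * β))) atTop (𝓝 0) :=
      Real.tendsto_exp_neg_atTop_nhds_zero.comp
        (tendsto_id.const_mul_atTop (by linarith : 0 < α - 1))
    have := pressure_limit hα.le hE ht
    have h4 : Real.sqrt (0 ^ 2 + 4) = 2 := by
      rw [show (0 : ℝ) ^ 2 + 4 = 2 ^ 2 by norm_num]; exact Real.sqrt_sq (by norm_num)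
    rw [h4] at this
    simpa using this
  · intro hα
    have ht : Tendsto (fun β : ℝ => Real.exp (-((α - 1) * β))) atTop (𝓝 1) := by
      simp [hα]
    have := pressure_limit hα.ge hE ht
    rw [show (1 : ℝ) ^ 2 + 4 = 5 by norm_num] at this
    have h5 : ((-1 + Real.sqrt 5) / 2)⁻¹ = (1 + Real.sqrt 5) / 2 := by
      rw [inv_eq_iff_eq_inv]
      refine eq_inv_of_mul_eq_one_left ?_
      nlinarith [Real.sq_sqrt (show (0 : ℝ) ≤ 5 by norm_num)]
    rwa [h5] at this

end
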